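/- Fix integers d ≥ 1, r ≥ 0 and a strict partition λ with d parts such that λ_i ≤ r + 2d − 2i + 1 for all i. Define ν_i = min{μ_i, μ_{i+1}, …, μ_d} for i ∈ {1,…,d}, and let P be the shifted tableau of shape λ with P(i,c) = c for c ≥ 0 and P(i,c) = r − c − ν_{d+1+c} for c < 0. Then the reading word π(P) = P_d P_{d−1} ⋯ P_1, viewed as a word in the letters {0, …, d+r−1}, is a reduced word of w^λ ∈ W(B_{d+r}). -/

import Mathlib

open scoped BigOperators

namespace BST

/-- `lam` (1-indexed, with `d` parts) is a strict partition: strictly decreasing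
positive parts `lam 1 > lam 2 > ⋯ > lam d > 0`. -/
def IsStrictPartition (d : ℕ) (lam : ℕ → ℕ) : Prop :=
  (∀ i : ℕ, 1 ≤ i → i < d → lam (i + 1) < lam i) ∧ 1 ≤ lam d

/-- The size `|λ| = λ_1 + ⋯ + λ_d`. -/
def sizeP (d : ℕ) (lam : ℕ → ℕ) : ℕ := ∑ i ∈ Finset.Icc 1 d, lam i

/-- The shifted diagram `D(λ) ⊆ ℤ × ℤ`: row `i` (1 ≤ i ≤ d) occupies columns
`i - d, …, λ_i + i - d - 1`. -/
def Diagram (d : ℕ) (lam : ℕ → ℕ) : Set (ℤ × ℤ) :=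
  {p : ℤ × ℤ | 1 ≤ p.1 ∧ p.1 ≤ (d : ℤ) ∧ p.1 - (d : ℤ) ≤ p.2 ∧
    p.2 + (d : ℤ) + 1 ≤ (lam p.1.toNat : ℤ) + p.1}

/-- The hook `H(i,c)`. -/
def Hook (d : ℕ) (lam : ℕ → ℕ) (i c : ℤ) : Set (ℤ × ℤ) :=
  {(i, c)} ∪ {p ∈ Diagram d lam | (p.1 = i ∧ c < p.2) ∨ (p.2 = c ∧ i < p.1)} ∪
    {p ∈ Diagram d lam | c < 0 ∧ p.1 = (d : ℤ) + 1 + c}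

/-- The extended hook `H̃(i,c)`. -/
def ExtHook (d : ℕ) (lam : ℕ → ℕ) (i c : ℤ) : Set (ℤ × ℤ) :=
  Hook d lam i c ∪ {p : ℤ × ℤ | c < 0 ∧ p = ((d : ℤ) + 1 + c, c)}

/-- The extended diagram `D(λ) ∪ {(i, i - d - 1) : 1 ≤ i ≤ d}`. -/
def ExtDiagram (d : ℕ) (lam : ℕ → ℕ) : Set (ℤ × ℤ) :=
  Diagram d lam ∪ {p : ℤ × ℤ | 1 ≤ p.1 ∧ p.1 ≤ (d : ℤ) ∧ p.2 = p.1 - ((d : ℤ) + 1)}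

/-- The extended filling `B̃`, with `B̃(i, i - d - 1) = B(i, 0)`. -/
def ExtFilling (d : ℕ) (B : ℤ × ℤ → ℕ) : ℤ × ℤ → ℕ :=
  fun p => if p.2 = p.1 - ((d : ℤ) + 1) then B (p.1, 0) else B p

/-- The rank function `rk(i,c)`. -/
def rk (d : ℕ) (lam : ℕ → ℕ) (i c : ℤ) : ℤ :=
  if 0 ≤ c then (lam i.toNat : ℤ) - d + i - c
  else (lam i.toNat : ℤ) - d + i + (lam ((d : ℤ) + 1 + c).toNat : ℤ) + c + 1

/-- A bijective filling of `D(λ)` with `1, …, |λ|` (normalized to be `0` off the diagram). -/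
def IsFilling (d : ℕ) (lam : ℕ → ℕ) (B : ℤ × ℤ → ℕ) : Prop :=
  Set.BijOn B (Diagram d lam) (Set.Icc 1 (sizeP d lam)) ∧
    ∀ p : ℤ × ℤ, p ∉ Diagram d lam → B p = 0

/-- A balanced shifted tableau: a bijective filling such that at each box `(i,c)`,
`B(i,c)` is the `rk(i,c)`-th largest entry of the multiset of values of `B̃` on the
extended hook, i.e. exactly `rk(i,c) - 1` boxes of the extended hook carry a value
strictly larger than `B(i,c)`. -/
def IsBalanced (d : ℕ) (lam : ℕ → ℕ) (B : ℤ × ℤ → ℕ) : Prop :=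
  IsFilling d lam B ∧ ∀ p ∈ Diagram d lam,
    ({q ∈ ExtHook d lam p.1 p.2 | B p < ExtFilling d B q}.ncard : ℤ) =
      rk d lam p.1 p.2 - 1

/-- A standard Young tableau of shifted shape `λ`. -/
def IsSYT (d : ℕ) (lam : ℕ → ℕ) (B : ℤ × ℤ → ℕ) : Prop :=
  IsFilling d lam B ∧ ∀ p ∈ Diagram d lam, ∀ q ∈ Diagram d lam,
    ((p.1 = q.1 ∧ p.2 < q.2) → B p < B q) ∧ ((p.2 = q.2 ∧ p.1 < q.1) → B p < B q)

/-- The simple reflections of `W(B_n)`, acting on `ℤ`: `s 0` swaps `1 ↔ -1`,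
and `s a` (for `a ≥ 1`) swaps `a ↔ a+1` and `-a ↔ -(a+1)`. -/
def sB (a : ℕ) : Equiv.Perm ℤ :=
  if a = 0 then Equiv.swap 1 (-1)
  else Equiv.swap (a : ℤ) ((a : ℤ) + 1) * Equiv.swap (-(a : ℤ)) (-(a : ℤ) - 1)

/-- The product `s_{a_1} s_{a_2} ⋯ s_{a_m}` of a word. -/
def wordProd (L : List ℕ) : Equiv.Perm ℤ := (L.map sB).prod

/-- A signed permutation in `W(B_n)`: odd, and the identity beyond `n`. -/
def IsSignedPerm (n : ℕ) (w : Equiv.Perm ℤ) : Prop :=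
  (∀ i : ℤ, w (-i) = -(w i)) ∧ ∀ i : ℤ, (n : ℤ) < |i| → w i = i

/-- The Coxeter length of `w` in `W(B_n)`. -/
noncomputable def lengthB (n : ℕ) (w : Equiv.Perm ℤ) : ℕ :=
  sInf {m : ℕ | ∃ L : List ℕ, (∀ a ∈ L, a < n) ∧ wordProd L = w ∧ L.length = m}

/-- `L` is a reduced word of `w` in `W(B_n)`. -/
def IsReducedWord (n : ℕ) (w : Equiv.Perm ℤ) (L : List ℕ) : Prop :=
  (∀ a ∈ L, a < n) ∧ wordProd L = w ∧ L.length = lengthB n w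

/-- The vector `e_k` (for `k ≥ 1` the `k`-th standard basis vector, with the
conventions `e 0 = 0` and `e (-k) = - e k`), represented as an odd function `ℤ → ℤ`. -/
def eVec (k : ℤ) : ℤ → ℤ :=
  fun t => if t = 0 then 0 else if t = k then 1 else if t = -k then -1 else 0

/-- The positive roots of type `B_n`. -/
def PosRoots (n : ℕ) : Set (ℤ → ℤ) :=
  {v | (∃ i j : ℤ, 1 ≤ i ∧ i < j ∧ j ≤ (n : ℤ) ∧
        (v = eVec j - eVec i ∨ v = eVec j + eVec i)) ∨
       (∃ i : ℤ, 1 ≤ i ∧ i ≤ (n : ℤ) ∧ v = eVec i)}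

/-- The action of a signed permutation on vectors: `w · e_i = e_{w(i)}`. -/
def actB (w : Equiv.Perm ℤ) (v : ℤ → ℤ) : ℤ → ℤ := fun t => v (w⁻¹ t)

/-- The inversion set `Inv(w) = {α ∈ Φ⁺ : w⁻¹ · α ∈ -Φ⁺}`. -/
def InvSet (n : ℕ) (w : Equiv.Perm ℤ) : Set (ℤ → ℤ) :=
  {α | α ∈ PosRoots n ∧ -(actB w⁻¹ α) ∈ PosRoots n}

/-- The simple roots: `α_0 = e_1` and `α_a = e_{a+1} - e_a` for `a ≥ 1`. -/
def alphaRoot (a : ℕ) : ℤ → ℤ :=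
  if a = 0 then eVec 1 else eVec ((a : ℤ) + 1) - eVec (a : ℤ)

/-- The reflection order of a word: `reflOrder L t = γ_{t+1} = s_{a_1} ⋯ s_{a_t} · α_{a_{t+1}}`
(0-indexed). -/
def reflOrder (L : List ℕ) (t : ℕ) : ℤ → ℤ :=
  actB (wordProd (L.take t)) (alphaRoot (L.getD t 0))

/-- The trapezoid `Z(d,r) = (r+2d-1, r+2d-3, …, r+1)`. -/
def Zlam (d r : ℕ) : ℕ → ℕ := fun i => r + 2 * d + 1 - 2 * i

/-- The labeling `f : D(Z(d,r)) → Φ⁺`. -/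
def fLabel (d r : ℕ) (p : ℤ × ℤ) : ℤ → ℤ :=
  if p.2 ≤ 0 then eVec ((d : ℤ) + 1 - p.1) - eVec p.2
  else if p.2 ≤ (r : ℤ) then eVec ((d : ℤ) + 1 - p.1) + eVec (p.2 + (d : ℤ))
  else eVec ((d : ℤ) + 1 - p.1) - eVec (p.2 - (r : ℤ))

/-- The extended labeling `f̃`, with `f̃(i, i - d - 1) = 2 e_{d+1-i}`. -/
def fExtLabel (d r : ℕ) (p : ℤ × ℤ) : ℤ → ℤ :=
  if p.2 = p.1 - ((d : ℤ) + 1) then (2 : ℤ) • eVec ((d : ℤ) + 1 - p.1)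
  else fLabel d r p

/-- `w` is the signed permutation `w^{(d,r)} ∈ W(B_{d+r})`, i.e.
`w(i) = d + i` for `1 ≤ i ≤ r` and `w(i) = -(i - r)` for `r < i ≤ d + r`. -/
def IsWdr (d r : ℕ) (w : Equiv.Perm ℤ) : Prop :=
  IsSignedPerm (d + r) w ∧
    (∀ i : ℤ, 1 ≤ i → i ≤ (r : ℤ) → w i = (d : ℤ) + i) ∧
    (∀ i : ℤ, (r : ℤ) < i → i ≤ (d : ℤ) + (r : ℤ) → w i = -(i - r))


/-- `x` lies strictly between `y` and `z` (i.e. `min(y,z) < x < max(y,z)`). -/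
def Between (x y z : ℕ) : Prop := (y < x ∧ x < z) ∨ (z < x ∧ x < y)

/-- A nonempty list is unimodal: strictly decreasing down to its minimum
(at 0-indexed position `k`), then strictly increasing. -/
def Unimodal (L : List ℕ) : Prop :=
  ∃ k : ℕ, k < L.length ∧
    (∀ a b : ℕ, a < b → b ≤ k → L.getD b 0 < L.getD a 0) ∧
    (∀ a b : ℕ, k ≤ a → a < b → b < L.length → L.getD a 0 < L.getD b 0)

/-- Row `i` of the distinguished tableau of shape `Z(d,r)`:
`(r+d-i, …, r+1, 0, 1, …, r+d-i)`. -/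
def rowWord (d r i : ℕ) : List ℕ :=
  (List.range (r + 2 * (d - i) + 1)).map fun t =>
    if t < d - i then r + (d - i) - t else t - (d - i)

/-- The reading word `π(T) = T_d T_{d-1} ⋯ T_1` of the distinguished tableau of
shape `Z(d,r)`. -/
def piWord (d r : ℕ) : List ℕ :=
  (List.range d).flatMap fun k => rowWord d r (d - k)

/-- `μ_i = Z(d,r)_i - λ_i`. -/
def muF (d r : ℕ) (lam : ℕ → ℕ) (i : ℕ) : ℕ := r + 2 * d + 1 - 2 * i - lam i

/-- `σ_i = μ_1 + ⋯ + μ_i`. -/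
def sigmaF (d r : ℕ) (lam : ℕ → ℕ) (i : ℕ) : ℕ := ∑ t ∈ Finset.Icc 1 i, muF d r lam t

/-- `ν_i = min{μ_i, …, μ_d}`. -/
noncomputable def nuF (d r : ℕ) (lam : ℕ → ℕ) (i : ℕ) : ℕ :=
  sInf {m : ℕ | ∃ j : ℕ, i ≤ j ∧ j ≤ d ∧ m = muF d r lam j}

/-- The word `a^λ`: the concatenation over `i = 1, …, d` of the increasing runs
`(d+r-i-μ_i+1, …, d+r-i)`. -/
def aLamWord (d r : ℕ) (lam : ℕ → ℕ) : List ℕ :=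
  (List.range d).flatMap fun k =>
    (List.range (muF d r lam (k + 1))).map fun t =>
      d + r - (k + 1) - muF d r lam (k + 1) + 1 + t

/-- Row `i` of the tableau `P(w^λ)`: entries `P(i,c) = c` for `c ≥ 0` and
`P(i,c) = r - c - ν_{d+1+c}` for `c < 0`. -/
noncomputable def rowWordP (d r : ℕ) (lam : ℕ → ℕ) (i : ℕ) : List ℕ :=
  (List.range (lam i)).map fun t =>
    if t < d - i then r + (d - i) - t - nuF d r lam (i + 1 + t) else t - (d - i)

/-- The reading word `π(P(w^λ))`. -/
noncomputable def piWordP (d r : ℕ) (lam : ℕ → ℕ) : List ℕ :=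
  (List.range d).flatMap fun k => rowWordP d r lam (d - k)

/-- The shape obtained from `λ` by adding one box at the end of row `i`. -/
def stepShape (lam : ℕ → ℕ) (i : ℕ) : ℕ → ℕ :=
  fun t => if t = i then lam i + 1 else lam t

/-- The box-adding map `f_i` on fillings: swap columns `j = λ_i + i - d` and `j + 1`
(in rows `1, …, i-1`), and put the value `N + 1` in the new box `(i, j)`. -/
def addBox (d : ℕ) (lam : ℕ → ℕ) (i : ℕ) (N : ℕ) (B : ℤ × ℤ → ℕ) : ℤ × ℤ → ℕ :=
  fun p =>
    if p = ((i : ℤ), (lam i : ℤ) + (i : ℤ) - (d : ℤ)) then N + 1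
    else if 1 ≤ p.1 ∧ p.1 < (i : ℤ) ∧ p.2 = (lam i : ℤ) + (i : ℤ) - (d : ℤ) then
      B (p.1, p.2 + 1)
    else if 1 ≤ p.1 ∧ p.1 < (i : ℤ) ∧ p.2 = (lam i : ℤ) + (i : ℤ) - (d : ℤ) + 1 then
      B (p.1, p.2 - 1)
    else B p

/-- Successively apply the box-adding maps along a list of row indices,
tracking the current shape. -/
def FmapAux (d : ℕ) : List ℕ → (ℕ → ℕ) → (ℤ × ℤ → ℕ) → (ℤ × ℤ → ℕ)
  | [], _, B => B
  | i :: rest, lam, B => FmapAux d rest (stepShape lam i) (addBox d lam i (sizeP d lam) B)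

/-- The shape after successively adding boxes along a list of row indices. -/
def shapeAux : List ℕ → (ℕ → ℕ) → (ℕ → ℕ)
  | [], lam => lam
  | i :: rest, lam => shapeAux rest (stepShape lam i)

/-- The list of row indices `1^{μ_1} 2^{μ_2} ⋯ d^{μ_d}` used to pad `λ` to `Z(d,r)`. -/
def rowsList (d r : ℕ) (lam : ℕ → ℕ) : List ℕ :=
  (List.range d).flatMap fun k => List.replicate (muF d r lam (k + 1)) (k + 1)

/-- `BS(Z(d,r))|_λ`: balanced tableaux of shape `Z(d,r)` such that for each
`i ∈ {1,…,d}` the entries `N + σ_{i-1} + 1, …, N + σ_i` all occur in row `i`. -/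
def BSRestricted (d r : ℕ) (lam : ℕ → ℕ) : Set (ℤ × ℤ → ℕ) :=
  {T | IsBalanced d (Zlam d r) T ∧ ∀ i : ℕ, 1 ≤ i → i ≤ d →
    ∀ k : ℕ, sizeP d lam + sigmaF d r lam (i - 1) + 1 ≤ k →
      k ≤ sizeP d lam + sigmaF d r lam i →
      ∃ c : ℤ, ((i : ℤ), c) ∈ Diagram d (Zlam d r) ∧ T ((i : ℤ), c) = k}

/-- `w ∈ W(B_n)` pattern embeds the signed pattern `v` (given as its one-line
notation, a list of nonzero integers). -/
def PatternEmbeds (n : ℕ) (w : Equiv.Perm ℤ) (v : List ℤ) : Prop :=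
  ∃ idx : Fin v.length → ℤ, StrictMono idx ∧
    (∀ j, 1 ≤ idx j ∧ idx j ≤ (n : ℤ)) ∧
    (∀ j, 0 < w (idx j) ↔ 0 < v.get j) ∧
    (∀ j k, |w (idx j)| < |w (idx k)| ↔ |v.get j| < |v.get k|)

/-!
Count rows from the bottom and let `p k` be the number of boxes of the `k`-th row in columns `≥ 0`.
Appending `a^λ` to `π(P)` completes `P` to the distinguished tableau of the trapezoid `Z(d,r)`: the
run of `a^λ` belonging to the top row extends that row in columns `≥ 0`, while the remaining runs
slide leftwards through the row. They pass its increasing part `0, 1, …` at the price of raising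
each letter by one, and on passing its decreasing part `P(·, -1), P(·, -2), …` they are lowered
again, turning the entries into those of the trapezoid. Only commutations and braid relations
`s_i s_{i+1} s_i = s_{i+1} s_i s_{i+1}` with `i ≥ 1` are involved, so this happens in any monoid.

Hence `π(P) a^λ` is a word of length `d(d+r)` for `w^{(d,r)}`. As `w^{(d,r)}` has `d(d+r)`
inversions, the word is reduced, and therefore so is its prefix `π(P)`.
-/

/-! ### Words and the braid relations -/

section Braid

variable {M : Type*} [Monoid M] {s : ℕ → M}

/-- The product in `M` of the generators `s a`, for `a` running through the word `L`. -/
def wordEval (s : ℕ → M) (L : List ℕ) : M := (L.map s).prod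

@[simp] lemma wordEval_nil : wordEval s [] = 1 := rfl

@[simp] lemma wordEval_cons (a : ℕ) (L : List ℕ) : wordEval s (a :: L) = s a * wordEval s L :=
  List.prod_cons

@[simp] lemma wordEval_append (L L' : List ℕ) :
    wordEval s (L ++ L') = wordEval s L * wordEval s L' := by
  simp [wordEval]

/-- The relations of the Artin monoid of type `B_∞`, except for the four-fold braid relation
between `s 0` and `s 1`. -/
structure BraidRelations (s : ℕ → M) : Prop where
  comm : ∀ i j, i + 2 ≤ j → Commute (s i) (s j)
  braid : ∀ i, 1 ≤ i → s i * s (i + 1) * s i = s (i + 1) * s i * s (i + 1)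

namespace BraidRelations

lemma commute_wordEval (hs : BraidRelations s) {i : ℕ} {L : List ℕ}
    (hL : ∀ j ∈ L, i + 2 ≤ j ∨ j + 2 ≤ i) : Commute (s i) (wordEval s L) := by
  refine Commute.list_prod_right _ _ fun x hx ↦ ?_
  obtain ⟨j, hj, rfl⟩ := List.mem_map.mp hx
  exact (hL j hj).elim (hs.comm i j) fun h ↦ (hs.comm j i h).symm

lemma commute_wordEval_wordEval (hs : BraidRelations s) {L L' : List ℕ}
    (hL : ∀ i ∈ L, ∀ j ∈ L', i + 2 ≤ j ∨ j + 2 ≤ i) :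
    Commute (wordEval s L) (wordEval s L') := by
  refine Commute.list_prod_left _ _ fun x hx ↦ ?_
  obtain ⟨i, hi, rfl⟩ := List.mem_map.mp hx
  exact hs.commute_wordEval (hL i hi)

lemma semiconjBy_Ico (hs : BraidRelations s) {a b j : ℕ} (hj : 1 ≤ j) (haj : a ≤ j)
    (hjb : j + 1 < b) : SemiconjBy (wordEval s (List.Ico a b)) (s j) (s (j + 1)) := by
  set u := wordEval s (List.Ico a j)
  set v := wordEval s (List.Ico (j + 2) b)
  have hsplit : wordEval s (List.Ico a b) = u * (s j * s (j + 1)) * v := by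
    rw [← List.Ico.append_consecutive haj (by omega), List.Ico.eq_cons (by omega : j < b),
      List.Ico.eq_cons hjb]
    simp only [wordEval_append, wordEval_cons, mul_assoc, u, v]
  have hu : SemiconjBy u (s (j + 1)) (s (j + 1)) :=
    (hs.commute_wordEval fun i hi ↦ by rw [List.Ico.mem] at hi; omega).symm
  have hv : SemiconjBy v (s j) (s j) :=
    (hs.commute_wordEval fun i hi ↦ by rw [List.Ico.mem] at hi; omega).symm
  have hbraid : SemiconjBy (s j * s (j + 1)) (s j) (s (j + 1)) := by
    rw [SemiconjBy, hs.braid j hj, mul_assoc]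
  exact hsplit ▸ (hu.mul_left hbraid).mul_left hv

lemma Ico_mul_wordEval (hs : BraidRelations s) {a b : ℕ} {L : List ℕ}
    (hL : ∀ j ∈ L, 1 ≤ j ∧ a ≤ j ∧ j + 1 < b) :
    wordEval s (List.Ico a b) * wordEval s L =
      wordEval s (L.map (· + 1)) * wordEval s (List.Ico a b) := by
  change SemiconjBy _ _ _
  induction L with
  | nil => exact SemiconjBy.one_right _
  | cons j L ih =>
    obtain ⟨⟨hj, haj, hjb⟩, hL⟩ := List.forall_mem_cons.mp hL
    rw [List.map_cons, wordEval_cons, wordEval_cons]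
    exact (hs.semiconjBy_Ico hj haj hjb).mul_right (ih hL)

end BraidRelations

end Braid

/-! ### Tableau words -/

section TableauWord

variable {M : Type*} [Monoid M] {s : ℕ → M} {p : ℕ → ℕ} {n : ℕ}

/-- The common value `P(·, -(j + 1))` of the entries in column `-(j + 1)` of the tableau `P`
whose `k`-th row from the bottom (`k ≥ 0`) has `p k` boxes in the columns `≥ 0`.
For `p k = r + 1 + k - μ_{d-k}` it equals `r + 1 + j - ν_{d-j}`, the minimum in `ν` becoming a
maximum. -/
def leftEntry (p : ℕ → ℕ) : ℕ → ℕ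
  | 0 => p 0
  | j + 1 => max (leftEntry p j + 1) (p (j + 1))

/-- The entries in negative columns of the `k`-th row from the bottom, read left to right. -/
def leftWord (p : ℕ → ℕ) (k : ℕ) : List ℕ := (List.range k).reverse.map (leftEntry p)

/-- The `k`-th row from the bottom of the tableau, counted from `k = 0`. -/
def tableauRow (p : ℕ → ℕ) (k : ℕ) : List ℕ := leftWord p k ++ List.Ico 0 (p k)

/-- The reading word of the bottom `k` rows of the tableau. -/
def tableauWord (p : ℕ → ℕ) (k : ℕ) : List ℕ := (List.range k).flatMap (tableauRow p)

/-- The word `a^λ` attached to the bottom `k` rows: the row with `p j` nonnegative columns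
contributes the run `p j, …, n + j - 1` that extends it to a row of the trapezoid, for which
`p j = n + j`. -/
def complementWord (n : ℕ) (p : ℕ → ℕ) (k : ℕ) : List ℕ :=
  (List.range k).reverse.flatMap fun j ↦ List.Ico (p j) (n + j)

lemma leftWord_succ (p : ℕ → ℕ) (k : ℕ) : leftWord p (k + 1) = leftEntry p k :: leftWord p k := by
  simp [leftWord, List.range_succ]

lemma tableauWord_succ (p : ℕ → ℕ) (k : ℕ) :
    tableauWord p (k + 1) = tableauWord p k ++ tableauRow p k := by
  simp [tableauWord, List.range_succ]

lemma complementWord_succ (n : ℕ) (p : ℕ → ℕ) (k : ℕ) :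
    complementWord n p (k + 1) = List.Ico (p k) (n + k) ++ complementWord n p k := by
  simp [complementWord, List.range_succ]

lemma strictMono_leftEntry (p : ℕ → ℕ) : StrictMono (leftEntry p) :=
  strictMono_nat_of_lt_succ fun _ ↦ Nat.lt_of_succ_le (le_max_left _ _)

lemma le_leftEntry (p : ℕ → ℕ) (j : ℕ) : p j ≤ leftEntry p j := by
  cases j with
  | zero => exact le_rfl
  | succ j => exact le_max_right _ _

lemma leftEntry_le (hle : ∀ k, p k ≤ n + k) (j : ℕ) : leftEntry p j ≤ n + j := by
  induction j with
  | zero => exact hle 0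
  | succ j ih => exact max_le (by omega) (hle (j + 1))

lemma leftEntry_trapezoid (n j : ℕ) : leftEntry (n + ·) j = n + j :=
  (leftEntry_le (fun _ ↦ le_rfl) j).antisymm (le_leftEntry _ j)

lemma mem_leftWord {k a : ℕ} : a ∈ leftWord p k ↔ ∃ j < k, leftEntry p j = a := by
  simp [leftWord]

lemma mem_complementWord {k a : ℕ} :
    a ∈ complementWord n p k ↔ ∃ j < k, p j ≤ a ∧ a < n + j := by
  simp [complementWord]

lemma lt_of_mem_tableauWord (hle : ∀ k, p k ≤ n + k) {k a : ℕ} (ha : a ∈ tableauWord p (k + 1)) :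
    a < n + k := by
  simp only [tableauWord, tableauRow, List.mem_flatMap, List.mem_append, List.mem_range,
    mem_leftWord, List.Ico.mem] at ha
  obtain ⟨j, hj, ⟨i, hi, rfl⟩ | ⟨-, ha⟩⟩ := ha
  · have := leftEntry_le hle i
    omega
  · have := hle j
    omega

lemma lt_of_mem_complementWord {k a : ℕ} (ha : a ∈ complementWord n p (k + 1)) : a < n + k := by
  obtain ⟨j, hj, -, ha⟩ := mem_complementWord.mp ha
  omega

lemma length_tableauWord_append_complementWord (hle : ∀ k, p k ≤ n + k) (k : ℕ) :
    (tableauWord p k ++ complementWord n p k).length = ∑ j ∈ Finset.range k, (n + 2 * j) := by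
  induction k with
  | zero => rfl
  | succ k ih =>
    have hlen : (tableauRow p k).length = k + p k := by simp [tableauRow, leftWord]
    have := hle k
    rw [Finset.sum_range_succ, ← ih, tableauWord_succ, complementWord_succ]
    simp only [List.length_append, hlen, List.Ico.length]
    omega

-- If `leftEntry p k = a`, the prepended letter extends the run and the rest of the word commutes
-- with it; otherwise `leftEntry p k = leftEntry p (k - 1) + 1` slides through the shorter run.
lemma BraidRelations.leftWord_mul_Ico (hs : BraidRelations s) (hpos : ∀ k, 0 < p k)
    (hmono : Monotone p) {k a b : ℕ} (hpa : p k ≤ a) (hak : a ≤ leftEntry p k)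
    (hkb : leftEntry p k < b) :
    wordEval s (leftWord p (k + 1)) * wordEval s (List.Ico (a + 1) b) =
      wordEval s (List.Ico a b) * wordEval s (leftWord p k) := by
  induction k with
  | zero =>
    obtain rfl : a = p 0 := le_antisymm hak hpa
    rw [List.Ico.eq_cons (show p 0 < b from hkb)]
    simp [leftWord, leftEntry]
  | succ k ih =>
    rw [leftWord_succ, wordEval_cons]
    obtain rfl | hlt := hak.eq_or_lt
    · have hcomm : Commute (wordEval s (leftWord p (k + 1)))
          (wordEval s (List.Ico (leftEntry p (k + 1) + 1) b)) :=
        hs.commute_wordEval_wordEval fun i hi j hj ↦ by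
          obtain ⟨i, hik, rfl⟩ := mem_leftWord.mp hi
          have := strictMono_leftEntry p hik
          rw [List.Ico.mem] at hj
          omega
      rw [List.Ico.eq_cons hkb, wordEval_cons, mul_assoc, mul_assoc, hcomm.eq]
    · have hsucc : leftEntry p (k + 1) = leftEntry p k + 1 := by
        have : p (k + 1) < leftEntry p (k + 1) := hpa.trans_lt hlt
        grind [leftEntry]
      rw [hsucc] at hlt hkb ⊢
      have hak : a ≤ leftEntry p k := Nat.lt_succ_iff.mp hlt
      have hslide := hs.semiconjBy_Ico ((hpos k).trans_le (le_leftEntry p k)) hak hkb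
      rw [mul_assoc, ih ((hmono k.le_succ).trans hpa) hak (by omega), ← mul_assoc, ← hslide.eq,
        mul_assoc, leftWord_succ, wordEval_cons]

lemma BraidRelations.leftWord_mul_complementWord (hs : BraidRelations s) (hpos : ∀ k, 0 < p k)
    (hmono : Monotone p) (hle : ∀ k, p k ≤ n + k) (k : ℕ) :
    wordEval s (leftWord p k) * wordEval s ((complementWord n p k).map (· + 1)) =
      wordEval s (complementWord n p k) * wordEval s (leftWord (n + ·) k) := by
  induction k with
  | zero => simp [leftWord, complementWord]
  | succ k ih =>
    have hshift : (List.Ico (p k) (n + k)).map (· + 1) = List.Ico (p k + 1) (n + k + 1) := by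
      simpa only [Nat.add_comm 1] using List.Ico.map_add (p k) (n + k) 1
    have hrun := hs.leftWord_mul_Ico hpos hmono le_rfl (le_leftEntry p k)
      (Nat.lt_succ_of_le (leftEntry_le hle k))
    have hcomm : Commute (s (n + k)) (wordEval s (complementWord n p k)) :=
      hs.commute_wordEval fun j hj ↦ by
        obtain ⟨i, hi, -, hj⟩ := mem_complementWord.mp hj
        omega
    calc wordEval s (leftWord p (k + 1)) * wordEval s ((complementWord n p (k + 1)).map (· + 1))
        = wordEval s (leftWord p (k + 1)) * wordEval s (List.Ico (p k + 1) (n + k + 1)) *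
            wordEval s ((complementWord n p k).map (· + 1)) := by
          rw [complementWord_succ, List.map_append, hshift, wordEval_append, mul_assoc]
      _ = wordEval s (List.Ico (p k) (n + k + 1)) *
            (wordEval s (complementWord n p k) * wordEval s (leftWord (n + ·) k)) := by
          rw [hrun, mul_assoc, ih]
      _ = wordEval s (List.Ico (p k) (n + k)) * (s (n + k) * wordEval s (complementWord n p k)) *
            wordEval s (leftWord (n + ·) k) := by
          simp [List.Ico.succ_top (hle k), mul_assoc]
      _ = wordEval s (complementWord n p (k + 1)) * wordEval s (leftWord (n + ·) (k + 1)) := by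
          simp [hcomm.eq, complementWord_succ, leftWord_succ, leftEntry_trapezoid, mul_assoc]

theorem BraidRelations.tableauWord_mul_complementWord (hs : BraidRelations s)
    (hpos : ∀ k, 0 < p k) (hmono : Monotone p) (hle : ∀ k, p k ≤ n + k) (k : ℕ) :
    wordEval s (tableauWord p k) * wordEval s (complementWord n p k) =
      wordEval s (tableauWord (n + ·) k) := by
  induction k with
  | zero => simp [tableauWord, complementWord]
  | succ k ih =>
    have hmerge : wordEval s (List.Ico 0 (p k)) * wordEval s (List.Ico (p k) (n + k)) =
        wordEval s (List.Ico 0 (n + k)) := by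
      rw [← wordEval_append, List.Ico.append_consecutive (Nat.zero_le _) (hle k)]
    have hshift := hs.Ico_mul_wordEval (a := 0) (b := n + k) (L := complementWord n p k)
      fun j hj ↦ by
        obtain ⟨i, hi, hij, hj⟩ := mem_complementWord.mp hj
        have := hpos i
        omega
    have hleft := hs.leftWord_mul_complementWord hpos hmono hle k
    calc wordEval s (tableauWord p (k + 1)) * wordEval s (complementWord n p (k + 1))
        = wordEval s (tableauWord p k) * wordEval s (leftWord p k) *
            (wordEval s (List.Ico 0 (p k)) * wordEval s (List.Ico (p k) (n + k))) *
              wordEval s (complementWord n p k) := by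
          simp only [tableauWord_succ, tableauRow, complementWord_succ, wordEval_append, mul_assoc]
      _ = wordEval s (tableauWord p k) *
            (wordEval s (leftWord p k) * wordEval s ((complementWord n p k).map (· + 1))) *
              wordEval s (List.Ico 0 (n + k)) := by
          rw [hmerge, mul_assoc _ _ (wordEval s (complementWord n p k)), hshift]
          simp only [mul_assoc]
      _ = wordEval s (tableauWord p k) * wordEval s (complementWord n p k) *
            (wordEval s (leftWord (n + ·) k) * wordEval s (List.Ico 0 (n + k))) := by
          rw [hleft]
          simp only [mul_assoc]
      _ = wordEval s (tableauWord (n + ·) (k + 1)) := by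
          simp only [ih, tableauWord_succ, tableauRow, wordEval_append]

end TableauWord

/-! ### Signed permutations -/

section SignedPerm

lemma sB_apply_of_pos {a : ℕ} (ha : 0 < a) (x : ℤ) :
    sB a x = if x = a then (a : ℤ) + 1 else if x = a + 1 then (a : ℤ)
      else if x = -a then -(a : ℤ) - 1 else if x = -a - 1 then -(a : ℤ) else x := by
  rw [sB, if_neg ha.ne', Equiv.Perm.mul_apply]
  grind

lemma sB_zero_apply (x : ℤ) : sB 0 x = if x = 1 then -1 else if x = -1 then 1 else x :=
  Equiv.swap_apply_def _ _ _

lemma sB_mul_self (a : ℕ) : sB a * sB a = 1 := by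
  ext x
  rw [Equiv.Perm.mul_apply, Equiv.Perm.one_apply]
  obtain rfl | ha := a.eq_zero_or_pos
  · rw [sB, if_pos rfl, Equiv.swap_apply_self]
  · rw [sB_apply_of_pos ha, sB_apply_of_pos ha]
    grind

lemma sB_neg (a : ℕ) (x : ℤ) : sB a (-x) = -sB a x := by
  obtain rfl | ha := a.eq_zero_or_pos
  · simp only [sB_zero_apply]
    split_ifs <;> omega
  · simp only [sB_apply_of_pos ha]
    split_ifs <;> omega

lemma mul_sB_eq_of_odd {w : Equiv.Perm ℤ} (hodd : ∀ i, w (-i) = -w i) {a : ℕ} (ha : 0 < a) :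
    w * sB a =
      Equiv.swap (w a) (w (a + 1)) * Equiv.swap (-w a) (-w (a + 1)) * w := by
  rw [sB, if_neg ha.ne', ← mul_assoc, Equiv.mul_swap_eq_swap_mul w, mul_assoc,
    Equiv.mul_swap_eq_swap_mul w, ← neg_add', hodd, hodd, mul_assoc]

lemma braidRelations_sB : BraidRelations sB where
  comm i j hij := by
    refine Equiv.Perm.Disjoint.commute fun x ↦ ?_
    rw [sB_apply_of_pos (by omega : 0 < j)]
    obtain rfl | hi := i.eq_zero_or_pos
    · rw [sB_zero_apply]
      split_ifs <;> omega
    · rw [sB_apply_of_pos hi]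
      split_ifs <;> omega
  braid i hi := by
    -- Both sides are the reflection interchanging `i` and `i + 2`.
    have hi_succ : 0 < i + 1 := i.succ_pos
    have apply_succ : sB i (i + 1) = i := by rw [sB_apply_of_pos hi]; split_ifs <;> omega
    have apply_succ_succ : sB i (i + 1 + 1) = i + 1 + 1 := by
      rw [sB_apply_of_pos hi]; split_ifs <;> omega
    have succ_apply_self : sB (i + 1) i = i := by
      rw [sB_apply_of_pos hi_succ]; push_cast; split_ifs <;> omega
    have succ_apply_succ : sB (i + 1) (i + 1) = i + 1 + 1 := by
      rw [sB_apply_of_pos hi_succ]; push_cast; split_ifs <;> omega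
    rw [mul_sB_eq_of_odd (sB_neg i) hi_succ, mul_sB_eq_of_odd (sB_neg (i + 1)) hi]
    push_cast
    rw [apply_succ, apply_succ_succ, succ_apply_self, succ_apply_succ, mul_assoc,
      mul_assoc _ (sB (i + 1)), sB_mul_self, sB_mul_self]

lemma wordProd_cons (a : ℕ) (L : List ℕ) : wordProd (a :: L) = sB a * wordProd L :=
  wordEval_cons a L

lemma wordProd_singleton (a : ℕ) : wordProd [a] = sB a := List.prod_singleton

lemma wordProd_append (L L' : List ℕ) : wordProd (L ++ L') = wordProd L * wordProd L' :=
  wordEval_append L L'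

lemma wordProd_mul_wordProd_reverse (L : List ℕ) : wordProd L * wordProd L.reverse = 1 := by
  induction L with
  | nil => rfl
  | cons a L ih =>
    calc wordProd (a :: L) * wordProd (a :: L).reverse
        = sB a * (wordProd L * wordProd L.reverse) * sB a := by
          simp only [List.reverse_cons, wordProd_append, wordProd_cons, mul_assoc]
          rfl
      _ = 1 := by rw [ih, mul_one, sB_mul_self]

lemma IsSignedPerm.map_zero {n : ℕ} {w : Equiv.Perm ℤ} (hw : IsSignedPerm n w) : w 0 = 0 := by
  have := hw.1 0
  rw [neg_zero] at this
  omega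

lemma IsSignedPerm.mul {n : ℕ} {v w : Equiv.Perm ℤ} (hv : IsSignedPerm n v)
    (hw : IsSignedPerm n w) : IsSignedPerm n (v * w) :=
  ⟨fun i ↦ by simp [hv.1, hw.1], fun i hi ↦ by rw [Equiv.Perm.mul_apply, hw.2 i hi, hv.2 i hi]⟩

lemma isSignedPerm_sB {n a : ℕ} (ha : a < n) : IsSignedPerm n (sB a) := by
  refine ⟨sB_neg a, fun i hi ↦ ?_⟩
  obtain rfl | hpos := a.eq_zero_or_pos
  · rw [sB_zero_apply]
    grind
  · rw [sB_apply_of_pos hpos]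
    grind

lemma wordProd_neg (L : List ℕ) (x : ℤ) : wordProd L (-x) = -wordProd L x := by
  induction L with
  | nil => rfl
  | cons a L ih =>
    rw [wordProd_cons, Equiv.Perm.mul_apply, ih, sB_neg, Equiv.Perm.mul_apply]

lemma isSignedPerm_wordProd {n : ℕ} {L : List ℕ} (hL : ∀ a ∈ L, a < n) :
    IsSignedPerm n (wordProd L) := by
  induction L with
  | nil => exact ⟨fun _ ↦ rfl, fun _ _ ↦ rfl⟩
  | cons a L ih =>
    obtain ⟨ha, hL⟩ := List.forall_mem_cons.mp hL
    exact (isSignedPerm_sB ha).mul (ih hL)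

lemma IsWdr.eq {d r : ℕ} {v w : Equiv.Perm ℤ} (hv : IsWdr d r v) (hw : IsWdr d r w) : v = w := by
  have hnonneg : ∀ x, 0 ≤ x → v x = w x := by
    intro x hx
    obtain rfl | hpos := hx.eq_or_lt
    · rw [hv.1.map_zero, hw.1.map_zero]
    obtain hxr | hrx := le_or_gt x r
    · rw [hv.2.1 x hpos hxr, hw.2.1 x hpos hxr]
    obtain hxd | hdx := le_or_gt x (d + r)
    · rw [hv.2.2 x hrx hxd, hw.2.2 x hrx hxd]
    · have hx_out : ((d + r : ℕ) : ℤ) < |x| := by rwa [abs_of_pos hpos, Nat.cast_add]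
      rw [hv.1.2 x hx_out, hw.1.2 x hx_out]
  ext x
  obtain hx | hx := le_total 0 x
  · exact hnonneg x hx
  · have := hnonneg (-x) (by omega)
    rwa [hv.1.1, hw.1.1, neg_inj] at this

end SignedPerm

/-! ### Inversions and length -/

section Inversions

/-- The type `B` inversions of a signed permutation `w`. The pair `(j, i)` with `-j ≤ i < j` and
`i ≠ 0` encodes the positive root `e_j - e_i` (where `e_{-i} = -e_i`), except that `(j, -j)`
encodes `e_j`. -/
noncomputable def inversions (n : ℕ) (w : Equiv.Perm ℤ) : Finset (Σ _ : ℕ, ℤ) :=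
  (Finset.Icc 1 n).sigma fun j ↦ {i ∈ Finset.Ico (-j : ℤ) j | i ≠ 0 ∧ w j < w i}

lemma mem_inversions {n : ℕ} {w : Equiv.Perm ℤ} {q : Σ _ : ℕ, ℤ} :
    q ∈ inversions n w ↔ (1 ≤ q.1 ∧ q.1 ≤ n) ∧ (-q.1 ≤ q.2 ∧ q.2 < q.1) ∧ q.2 ≠ 0 ∧
      w q.1 < w q.2 := by
  simp [inversions]

lemma eq_of_sB_lt_sB {a : ℕ} {x y : ℤ} (hxy : x < y) (hrev : sB a y < sB a x) :
    (a = 0 ∧ x = -1 ∧ y = 1) ∨ (x = a ∧ y = a + 1) ∨ (x = -a - 1 ∧ y = -a) := by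
  obtain rfl | ha := a.eq_zero_or_pos
  · rw [sB_zero_apply, sB_zero_apply] at hrev
    split_ifs at hrev <;> omega
  · rw [sB_apply_of_pos ha, sB_apply_of_pos ha] at hrev
    split_ifs at hrev <;> omega

lemma eq_or_eq_neg_of_sB_lt_sB {a : ℕ} {x y x' y' : ℤ} (hx : x ≠ 0) (hy : y ≠ 0) (hxy : x < y)
    (hrev : sB a y < sB a x) (hx' : x' ≠ 0) (hy' : y' ≠ 0) (hxy' : x' < y')
    (hrev' : sB a y' < sB a x') : (x' = x ∧ y' = y) ∨ (x' = -y ∧ y' = -x) := by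
  have := eq_of_sB_lt_sB hxy hrev
  have := eq_of_sB_lt_sB hxy' hrev'
  omega

lemma card_inversions_sB_mul_le {n : ℕ} (a : ℕ) {w : Equiv.Perm ℤ}
    (hw : IsSignedPerm n w) :
    (inversions n (sB a * w)).card ≤ (inversions n w).card + 1 := by
  have hne {x : ℤ} (hx : x ≠ 0) : w x ≠ 0 := hw.map_zero ▸ w.injective.ne hx
  have hnew : (inversions n (sB a * w) \ inversions n w).card ≤ 1 := by
    rw [Finset.card_le_one]
    have hnew_lt {j : ℕ} {i : ℤ} (hji : ⟨j, i⟩ ∈ inversions n (sB a * w) \ inversions n w) :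
        ((0 : ℤ) < j ∧ -j ≤ i ∧ i ≠ 0) ∧ w i < w j ∧ sB a (w j) < sB a (w i) := by
      simp only [Finset.mem_sdiff, mem_inversions, Equiv.Perm.mul_apply] at hji
      have := w.injective.ne hji.1.2.1.2.ne
      omega
    rintro ⟨j, i⟩ hji ⟨j', i'⟩ hji'
    obtain ⟨⟨hj, hi_ge, hi⟩, hlt, hrev⟩ := hnew_lt hji
    obtain ⟨⟨hj', hi_ge', hi'⟩, hlt', hrev'⟩ := hnew_lt hji'
    suffices i' = i ∧ (j' : ℤ) = j by grind
    obtain ⟨heq_i, heq_j⟩ | ⟨heq_i, heq_j⟩ :=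
      eq_or_eq_neg_of_sB_lt_sB (hne hi) (hne hj.ne') hlt hrev (hne hi') (hne hj'.ne') hlt' hrev'
    · exact ⟨w.injective heq_i, w.injective heq_j⟩
    · rw [← hw.1] at heq_i heq_j
      have := w.injective heq_i
      have := w.injective heq_j
      omega
  have := Finset.card_le_card_sdiff_add_card (s := inversions n (sB a * w)) (t := inversions n w)
  omega

lemma card_inversions_wordProd_le {n : ℕ} {L : List ℕ} (hL : ∀ a ∈ L, a < n) :
    (inversions n (wordProd L)).card ≤ L.length := by
  induction L with
  | nil =>
    refine (Finset.card_eq_zero.mpr (Finset.eq_empty_of_forall_notMem fun q hq ↦ ?_)).le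
    obtain ⟨-, ⟨-, hlt⟩, -, hinv⟩ := mem_inversions.mp hq
    exact hlt.not_gt hinv
  | cons a L ih =>
    have hL' := (List.forall_mem_cons.mp hL).2
    exact (card_inversions_sB_mul_le a (isSignedPerm_wordProd hL')).trans
      (Nat.succ_le_succ (ih hL'))

lemma lengthB_le {n : ℕ} {L : List ℕ} (hL : ∀ a ∈ L, a < n) :
    lengthB n (wordProd L) ≤ L.length :=
  Nat.sInf_le ⟨L, hL, rfl, rfl⟩

lemma exists_isReducedWord {n : ℕ} {L : List ℕ} (hL : ∀ a ∈ L, a < n) :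
    ∃ L', IsReducedWord n (wordProd L) L' := by
  obtain ⟨L', hL', hprod, hlen⟩ := Nat.sInf_mem (s := {m | ∃ L' : List ℕ, (∀ a ∈ L', a < n) ∧
    wordProd L' = wordProd L ∧ L'.length = m}) ⟨_, L, hL, rfl, rfl⟩
  exact ⟨L', hL', hprod, hlen⟩

lemma isReducedWord_of_length_le_card_inversions {n : ℕ} {L : List ℕ} (hL : ∀ a ∈ L, a < n)
    (hlen : L.length ≤ (inversions n (wordProd L)).card) : IsReducedWord n (wordProd L) L := by
  refine ⟨hL, rfl, le_antisymm ?_ (lengthB_le hL)⟩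
  obtain ⟨L', hL', hprod, hlen'⟩ := exists_isReducedWord hL
  rw [← hlen']
  exact hlen.trans (hprod ▸ card_inversions_wordProd_le hL')

lemma IsReducedWord.of_append {n : ℕ} {L L' : List ℕ}
    (h : IsReducedWord n (wordProd (L ++ L')) (L ++ L')) : IsReducedWord n (wordProd L) L := by
  obtain ⟨hletters, -, hlen⟩ := h
  obtain ⟨hL, hL'⟩ := List.forall_mem_append.mp hletters
  refine ⟨hL, rfl, le_antisymm ?_ (lengthB_le hL)⟩
  obtain ⟨K, hK, hprod, hK_len⟩ := exists_isReducedWord hL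
  have hle := lengthB_le (List.forall_mem_append.mpr ⟨hK, hL'⟩)
  rw [wordProd_append, hprod, ← wordProd_append, ← hlen] at hle
  simp only [List.length_append] at hle
  omega

lemma IsWdr.le_card_inversions_fiber {d r : ℕ} {w : Equiv.Perm ℤ} (hw : IsWdr d r w) {k : ℕ}
    (hk : k < d) :
    r + 1 + 2 * k ≤ Finset.card {i ∈ Finset.Ico (-(r + 1 + k : ℕ) : ℤ) (r + 1 + k : ℕ) |
      i ≠ 0 ∧ w (r + 1 + k : ℕ) < w i} := by
  have hsub : Finset.Ico (-(r + 1 + k : ℕ) : ℤ) (-r) ∪ Finset.Ico 1 (r + 1 + k : ℕ) ⊆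
      {i ∈ Finset.Ico (-(r + 1 + k : ℕ) : ℤ) (r + 1 + k : ℕ) |
        i ≠ 0 ∧ w (r + 1 + k : ℕ) < w i} := by
    intro i hi
    have hj := hw.2.2 (r + 1 + k : ℕ) (by omega) (by omega)
    have hsmall := hw.2.1 i
    have hlarge := hw.2.2 i
    have hneg := hw.2.2 (-i)
    have hodd := hw.1.1 i
    simp only [Finset.mem_union, Finset.mem_filter, Finset.mem_Ico] at hi ⊢
    omega
  have hdisj : Disjoint (Finset.Ico (-(r + 1 + k : ℕ) : ℤ) (-r))
      (Finset.Ico 1 (r + 1 + k : ℕ)) := by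
    simp only [Finset.disjoint_left, Finset.mem_Ico]
    omega
  refine le_trans ?_ (Finset.card_le_card hsub)
  rw [Finset.card_union_of_disjoint hdisj, Int.card_Ico, Int.card_Ico]
  omega

lemma IsWdr.sum_le_card_inversions {d r : ℕ} {w : Equiv.Perm ℤ} (hw : IsWdr d r w) :
    ∑ k ∈ Finset.range d, (r + 1 + 2 * k) ≤ (inversions (d + r) w).card := by
  calc ∑ k ∈ Finset.range d, (r + 1 + 2 * k)
      ≤ ∑ j ∈ Finset.Ico (r + 1) (r + 1 + d),
          Finset.card {i ∈ Finset.Ico (-j : ℤ) j | i ≠ 0 ∧ w j < w i} := by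
        rw [Finset.sum_Ico_eq_sum_range, Nat.add_sub_cancel_left]
        exact Finset.sum_le_sum fun k hk ↦ hw.le_card_inversions_fiber (Finset.mem_range.mp hk)
    _ ≤ (inversions (d + r) w).card := by
        rw [inversions, Finset.card_sigma]
        refine Finset.sum_le_sum_of_subset fun j hj ↦ ?_
        rw [Finset.mem_Ico] at hj
        rw [Finset.mem_Icc]
        omega

end Inversions

/-! ### The trapezoid -/

section Trapezoid

variable {r : ℕ}

lemma wordProd_Ico_zero_apply (k : ℕ) {x : ℤ} (hx : 1 ≤ x) :
    wordProd (List.Ico 0 (k + 1)) x = if x ≤ k then x + 1 else if x = k + 1 then -1 else x := by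
  induction k generalizing x with
  | zero =>
    rw [List.Ico.succ_singleton, wordProd_singleton, sB_zero_apply]
    split_ifs <;> omega
  | succ k ih =>
    have hlast : 1 ≤ sB (k + 1) x := by
      rw [sB_apply_of_pos k.succ_pos]
      split_ifs <;> omega
    rw [List.Ico.succ_top (Nat.zero_le _), wordProd_append, Equiv.Perm.mul_apply,
      wordProd_singleton, ih hlast, sB_apply_of_pos k.succ_pos]
    push_cast
    grind

lemma wordProd_leftWord_trapezoid_apply (k : ℕ) {x : ℤ} (hx : 1 ≤ x) :
    wordProd (leftWord (r + 1 + ·) k) x =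
      if x = r + 1 then (r : ℤ) + 1 + k else if r + 1 < x ∧ x ≤ r + 1 + k then x - 1 else x := by
  induction k with
  | zero =>
    change x = _
    grind
  | succ k ih =>
    rw [leftWord_succ, wordProd_cons, Equiv.Perm.mul_apply, ih, leftEntry_trapezoid,
      sB_apply_of_pos (by omega)]
    push_cast
    split_ifs <;> omega

lemma wordProd_tableauRow_trapezoid_apply (k : ℕ) {x : ℤ} (hx : 1 ≤ x) (hxk : x ≤ r + k + 1) :
    wordProd (tableauRow (r + 1 + ·) k) x =
      if x < r then x + 1 else if x = r then (r : ℤ) + 1 + k else if x ≤ r + k then x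
        else if r = 0 then -(k + 1 : ℤ) else -1 := by
  have hIco : wordProd (List.Ico 0 (r + 1 + k)) x = if x ≤ r + k then x + 1 else -1 := by
    rw [add_right_comm r 1 k, wordProd_Ico_zero_apply (r + k) hx]
    push_cast
    grind
  rw [tableauRow, wordProd_append, Equiv.Perm.mul_apply, hIco]
  obtain hle | hlast := le_or_gt x (r + k)
  · rw [if_pos hle, wordProd_leftWord_trapezoid_apply k (by omega)]
    grind
  · rw [if_neg hlast.not_ge, wordProd_neg, wordProd_leftWord_trapezoid_apply k le_rfl]
    grind

lemma isWdr_wordProd_tableauWord (r d : ℕ) : IsWdr d r (wordProd (tableauWord (r + 1 + ·) d)) := by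
  induction d with
  | zero =>
    exact ⟨isSignedPerm_wordProd (L := []) (by simp), by simp [tableauWord, wordProd], by omega⟩
  | succ k ih =>
    obtain ⟨⟨w_neg, w_fix⟩, w_le, w_gt⟩ := ih
    have w_fix_last : wordProd (tableauWord (r + 1 + ·) k) (r + 1 + k) = r + 1 + k :=
      w_fix _ (by rw [abs_of_pos] <;> omega)
    refine ⟨isSignedPerm_wordProd fun a ha ↦ ?_, fun x hx hxr ↦ ?_, fun x hrx hx ↦ ?_⟩
    · have := lt_of_mem_tableauWord (fun _ ↦ le_rfl) ha
      omega
    · rw [tableauWord_succ, wordProd_append, Equiv.Perm.mul_apply,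
        wordProd_tableauRow_trapezoid_apply k hx (by omega)]
      have := w_le (x + 1)
      split_ifs <;> omega
    · rw [tableauWord_succ, wordProd_append, Equiv.Perm.mul_apply,
        wordProd_tableauRow_trapezoid_apply k (by omega) (by omega)]
      have := w_gt x
      have := w_neg 1
      have := w_neg (k + 1)
      have := w_le 1
      split_ifs <;> grind

end Trapezoid

/-! ### The tableau `P` of a strict partition -/

section Partition

variable {d r : ℕ} {lam : ℕ → ℕ}

/-- The number of boxes in columns `≥ 0` of the `k`-th row from the bottom of `D(λ)`, counted from
`k = 0`. Above the top row it is continued by rows of a trapezoid, so as to be monotone in `k`. -/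
def nonnegCount (d r : ℕ) (lam : ℕ → ℕ) (k : ℕ) : ℕ :=
  if k < d then lam (d - k) - k else r + 1 + k

lemma IsStrictPartition.lt_apply_sub (hlam : IsStrictPartition d lam) {k : ℕ} (hk : k < d) :
    k < lam (d - k) := by
  induction k with
  | zero => exact hlam.2
  | succ k ih =>
    have hlt := hlam.1 (d - (k + 1)) (by omega) (by omega)
    rw [show d - (k + 1) + 1 = d - k by omega] at hlt
    exact Nat.lt_of_le_of_lt (ih (by omega)) hlt

lemma nonnegCount_pos (hlam : IsStrictPartition d lam) (k : ℕ) : 0 < nonnegCount d r lam k := by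
  have := hlam.lt_apply_sub (k := k)
  rw [nonnegCount]
  split_ifs <;> omega

lemma add_nonnegCount (hlam : IsStrictPartition d lam) {k : ℕ} (hk : k < d) :
    k + nonnegCount d r lam k = lam (d - k) := by
  have := hlam.lt_apply_sub hk
  rw [nonnegCount, if_pos hk]
  omega

lemma nonnegCount_add_muF (hlam : IsStrictPartition d lam)
    (hsub : ∀ i : ℕ, 1 ≤ i → i ≤ d → lam i ≤ Zlam d r i) {k : ℕ} (hk : k < d) :
    nonnegCount d r lam k + muF d r lam (d - k) = r + 1 + k := by
  have := add_nonnegCount (r := r) hlam hk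
  have hle := hsub (d - k) (by omega) (by omega)
  rw [Zlam] at hle
  rw [muF]
  omega

lemma nonnegCount_le (hlam : IsStrictPartition d lam)
    (hsub : ∀ i : ℕ, 1 ≤ i → i ≤ d → lam i ≤ Zlam d r i) (k : ℕ) :
    nonnegCount d r lam k ≤ r + 1 + k := by
  obtain hk | hk := lt_or_ge k d
  · have := nonnegCount_add_muF hlam hsub hk
    omega
  · rw [nonnegCount, if_neg hk.not_gt]

lemma monotone_nonnegCount (hlam : IsStrictPartition d lam)
    (hsub : ∀ i : ℕ, 1 ≤ i → i ≤ d → lam i ≤ Zlam d r i) : Monotone (nonnegCount d r lam) := by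
  refine monotone_nat_of_le_succ fun k ↦ ?_
  obtain hk | hk := lt_or_ge (k + 1) d
  · have hlt := hlam.1 (d - (k + 1)) (by omega) (by omega)
    rw [show d - (k + 1) + 1 = d - k by omega] at hlt
    rw [nonnegCount, nonnegCount, if_pos (by omega), if_pos hk]
    omega
  · calc nonnegCount d r lam k ≤ r + 1 + k := nonnegCount_le hlam hsub k
      _ ≤ r + 1 + (k + 1) := by omega
      _ = nonnegCount d r lam (k + 1) := by rw [nonnegCount, if_neg hk.not_gt]

lemma nuF_self (d r : ℕ) (lam : ℕ → ℕ) : nuF d r lam d = muF d r lam d := by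
  have hset : {m | ∃ j, d ≤ j ∧ j ≤ d ∧ m = muF d r lam j} = {muF d r lam d} := by
    ext m
    grind
  rw [nuF, hset, csInf_singleton]

lemma nuF_eq_min {i : ℕ} (hi : i < d) :
    nuF d r lam i = min (muF d r lam i) (nuF d r lam (i + 1)) := by
  have hset : {m | ∃ j, i ≤ j ∧ j ≤ d ∧ m = muF d r lam j} =
      insert (muF d r lam i) {m | ∃ j, i + 1 ≤ j ∧ j ≤ d ∧ m = muF d r lam j} := by
    ext m
    simp only [Set.mem_ofPred_eq, Set.mem_insert_iff]
    grind
  exact (congrArg sInf hset).trans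
    (csInf_insert (OrderBot.bddBelow _) ⟨_, d, hi, le_rfl, rfl⟩)

lemma leftEntry_nonnegCount_add_nuF (hlam : IsStrictPartition d lam)
    (hsub : ∀ i : ℕ, 1 ≤ i → i ≤ d → lam i ≤ Zlam d r i) {j : ℕ} (hj : j < d) :
    leftEntry (nonnegCount d r lam) j + nuF d r lam (d - j) = r + 1 + j := by
  induction j with
  | zero => exact nuF_self d r lam ▸ nonnegCount_add_muF hlam hsub hj
  | succ j ih =>
    have := ih (by omega)
    have := nonnegCount_add_muF hlam hsub hj
    rw [leftEntry, nuF_eq_min (by omega), show d - (j + 1) + 1 = d - j by omega]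
    omega

lemma reverse_range_eq_map (k : ℕ) : (List.range k).reverse = (List.range k).map (k - 1 - ·) := by
  simp [List.range_eq_range', List.reverse_range']

lemma rowWordP_eq_tableauRow (hlam : IsStrictPartition d lam)
    (hsub : ∀ i : ℕ, 1 ≤ i → i ≤ d → lam i ≤ Zlam d r i) {k : ℕ} (hk : k < d) :
    rowWordP d r lam (d - k) = tableauRow (nonnegCount d r lam) k := by
  rw [rowWordP, ← add_nonnegCount (r := r) hlam hk, List.range_add, List.map_append, tableauRow,
    leftWord, reverse_range_eq_map, List.map_map, List.map_map, Nat.sub_sub_self hk.le,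
    List.Ico.zero_bot]
  congr 1
  · refine List.map_congr_left fun t ht ↦ ?_
    have htk := List.mem_range.mp ht
    have := leftEntry_nonnegCount_add_nuF hlam hsub (j := k - 1 - t) (by omega)
    rw [if_pos htk, Function.comp_apply, show d - k + 1 + t = d - (k - 1 - t) by omega]
    omega
  · refine (List.map_congr_left fun t _ ↦ ?_).trans (List.map_id _)
    rw [Function.comp_apply, if_neg (by omega), Nat.add_sub_cancel_left, id]

lemma piWordP_eq_tableauWord (hlam : IsStrictPartition d lam)
    (hsub : ∀ i : ℕ, 1 ≤ i → i ≤ d → lam i ≤ Zlam d r i) :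
    piWordP d r lam = tableauWord (nonnegCount d r lam) d :=
  List.flatMap_congr fun _ hk ↦ rowWordP_eq_tableauRow hlam hsub (List.mem_range.mp hk)

lemma aLamWord_eq_complementWord (hlam : IsStrictPartition d lam)
    (hsub : ∀ i : ℕ, 1 ≤ i → i ≤ d → lam i ≤ Zlam d r i) :
    aLamWord d r lam = complementWord (r + 1) (nonnegCount d r lam) d := by
  rw [aLamWord, complementWord, reverse_range_eq_map, List.flatMap_map]
  refine List.flatMap_congr fun k hk ↦ ?_
  have hkd := List.mem_range.mp hk
  have hpos := nonnegCount_pos (r := r) hlam (d - 1 - k)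
  have hmu := nonnegCount_add_muF hlam hsub (k := d - 1 - k) (by omega)
  rw [show d - (d - 1 - k) = k + 1 by omega] at hmu
  rw [List.Ico, List.range'_eq_map_range, ← hmu, Nat.add_sub_cancel_left]
  refine List.map_congr_left fun t _ ↦ ?_
  omega

end Partition

/-- the reading word of the tableau `P` of shape `λ` with
`P(i,c) = c` for `c ≥ 0` and `P(i,c) = r - c - ν_{d+1+c}` for `c < 0`
is a reduced word of `w^λ`. -/
theorem piWordP_is_reduced (d r : ℕ) (hd : 1 ≤ d)
    (lam : ℕ → ℕ) (hlam : IsStrictPartition d lam)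
    (hsub : ∀ i : ℕ, 1 ≤ i → i ≤ d → lam i ≤ Zlam d r i)
    (w : Equiv.Perm ℤ) (hw : IsWdr d r w) :
    IsReducedWord (d + r) (w * wordProd (aLamWord d r lam).reverse)
      (piWordP d r lam) := by
  have hle := nonnegCount_le hlam hsub
  rw [aLamWord_eq_complementWord hlam hsub, piWordP_eq_tableauWord hlam hsub]
  set π := tableauWord (nonnegCount d r lam) d
  set a := complementWord (r + 1) (nonnegCount d r lam) d
  have hprod : wordProd (π ++ a) = w := by
    rw [hw.eq (isWdr_wordProd_tableauWord r d)]
    exact (wordProd_append π a).trans <| braidRelations_sB.tableauWord_mul_complementWord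
      (nonnegCount_pos hlam) (monotone_nonnegCount hlam hsub) hle d
  have hletters : ∀ c ∈ π ++ a, c < d + r := by
    obtain ⟨k, rfl⟩ := Nat.exists_eq_add_of_le' hd
    refine List.forall_mem_append.mpr ⟨fun c hc ↦ ?_, fun c hc ↦ ?_⟩
    · have := lt_of_mem_tableauWord hle hc
      omega
    · have := lt_of_mem_complementWord hc
      omega
  have hreduced : IsReducedWord (d + r) (wordProd (π ++ a)) (π ++ a) := by
    refine isReducedWord_of_length_le_card_inversions hletters ?_
    rw [length_tableauWord_append_complementWord hle, hprod]
    exact hw.sum_le_card_inversions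
  have hw_mul : w * wordProd a.reverse = wordProd π := by
    rw [← hprod, wordProd_append, mul_assoc, wordProd_mul_wordProd_reverse, mul_one]
  exact hw_mul ▸ hreduced.of_append

end BST
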